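/- arXiv:2603.05662 — 2 statements merged into one kernel-verified Lean document; each statement's English description precedes it below -/
import Mathlib

section
/- Let m ≡ 2 (mod 4), m ≥ 2. Consider the cycle C_m with vertices v_1,…,v_m, and the vertex-labelling a(v_i) = (i−1)/2 for i odd, a(v_i) = m + 1 − i/2 for i even with i ≤ m/2, and a(v_i) = m − i/2 for i even with i > m/2. Let C_m* be the digraph on these vertices whose directed edges are obtained from the natural orientation of a on C_m, except that the edge between v_m and v_1 is oriented as (v_m, v_1)-reversed, i.e. from v_m to v_1 reversed relative to the natural orientation (so it is directed from the larger label to the smaller). Then a is an oriented β-valuation of C_m*: the multiset {a(head) − a(tail) mod (m+1) : directed edges of C_m*} equals Z_{m+1} ∖ {0}. -/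
/-!
Along the path `v_1, …, v_m` the labels zigzag between small and large values, so the absolute
differences of consecutive labels run down `m, m - 1, …`. Let `s = m / 2`. Skipping one of the large
values makes this list of differences skip a single entry, which is `m + 1 - s` when `s` is odd,
that is, when `2 ≤ m % 4`. The last label is `s` itself, so the reversed closing edge contributes
`0 - s`, which is the missing residue modulo `m + 1`.
-/

/-- The zigzag labelling `0, N, 1, N - 1, …` whose odd-indexed labels are lowered by one from index
`s` on. For odd `s` these therefore avoid the label `N - (s - 1) / 2`. The index `k` stands for the
vertex `v_{k+1}` of a path. -/
def gappedZigzag (N s k : ℕ) : ℕ :=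
  if k % 2 = 0 then k / 2
  else if k + 1 ≤ s then N + 1 - (k + 1) / 2
  else N - (k + 1) / 2

section gappedZigzag

variable {N s k : ℕ}

theorem gappedZigzag_le (hk : k ≤ 2 * N + 1) : gappedZigzag N s k ≤ N := by
  unfold gappedZigzag
  split_ifs <;> omega

theorem two_mul_gappedZigzag_lt_iff (hk : k < N) :
    2 * gappedZigzag N s k < N ↔ k % 2 = 0 := by
  unfold gappedZigzag
  split_ifs <;> omega

theorem gappedZigzag_injOn (N s : ℕ) : Set.InjOn (gappedZigzag N s) (Set.Iio N) := by
  intro j hj k hk h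
  rw [Set.mem_Iio] at hj hk
  have same_parity : j % 2 = 0 ↔ k % 2 = 0 := by
    rw [← two_mul_gappedZigzag_lt_iff hj, ← two_mul_gappedZigzag_lt_iff hk, h]
  unfold gappedZigzag at h
  by_cases k_even : k % 2 = 0
  · have j_even := same_parity.mpr k_even
    rw [if_pos j_even, if_pos k_even] at h
    omega
  · have j_odd := mt same_parity.mp k_even
    rw [if_neg j_odd, if_neg k_even] at h
    split_ifs at h <;> omega

theorem gappedZigzag_zero (N s : ℕ) : gappedZigzag N s 0 = 0 := rfl

theorem gappedZigzag_pred (hs : s < N) : gappedZigzag N s (N - 1) = N / 2 := by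
  unfold gappedZigzag
  split_ifs <;> omega

theorem dist_gappedZigzag_succ (hs : s % 2 = 1) (hk : k + 1 < N) :
    Nat.dist (gappedZigzag N s k) (gappedZigzag N s (k + 1)) =
      N - if k < s - 1 then k else k + 1 := by
  unfold gappedZigzag Nat.dist
  split_ifs <;> omega

end gappedZigzag

theorem map_skip_range_add_singleton {n t : ℕ} (ht : t ≤ n) :
    (Multiset.range n).map (fun k => if k < t then k else k + 1) + {t} =
      Multiset.range (n + 1) := by
  induction n, ht using Nat.le_induction with
  | base =>
    have fixed : (Multiset.range t).map (fun k => if k < t then k else k + 1) =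
        Multiset.range t :=
      (Multiset.map_congr rfl fun k hk => if_pos (Multiset.mem_range.mp hk)).trans
        (Multiset.map_id' _)
    rw [fixed, Multiset.range_succ, add_comm, Multiset.singleton_add]
  | succ n htn ih =>
    rw [Multiset.range_succ, Multiset.map_cons, Multiset.cons_add, ih, if_neg htn.not_gt,
      ← Multiset.range_succ]

theorem map_dist_gappedZigzag_add_singleton {N s : ℕ} (hs : s % 2 = 1) (hsN : s ≤ N) :
    (Multiset.range (N - 1)).map
        (fun k => Nat.dist (gappedZigzag N s k) (gappedZigzag N s (k + 1))) + {N + 1 - s} =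
      (Multiset.range N).map (N - ·) := by
  have missing : N + 1 - s = N - (s - 1) := by omega
  have skip_range := map_skip_range_add_singleton (show s - 1 ≤ N - 1 by omega)
  rw [Nat.sub_add_cancel (by omega : 1 ≤ N)] at skip_range
  rw [← skip_range, Multiset.map_add, Multiset.map_map, Multiset.map_singleton, missing]
  congr 1
  refine Multiset.map_congr rfl fun k hk => dist_gappedZigzag_succ hs ?_
  rw [Multiset.mem_range] at hk
  omega

theorem map_natCast_sub_range (n : ℕ) :
    (Multiset.range n).map (fun j => ((n - j : ℕ) : ZMod (n + 1))) =
      (Finset.univ \ {0} : Finset (ZMod (n + 1))).val := by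
  have val_cast (j : ℕ) : ((n - j : ℕ) : ZMod (n + 1)).val = n - j :=
    ZMod.val_natCast_of_lt (by omega)
  have injOn : Set.InjOn (fun j => ((n - j : ℕ) : ZMod (n + 1))) (Finset.range n) := by
    intro i hi j hj h
    have val_eq := congrArg ZMod.val h
    simp only [val_cast] at val_eq
    simp only [Finset.coe_range, Set.mem_Iio] at hi hj
    omega
  rw [← Finset.range_val, ← Finset.image_val_of_injOn injOn, Finset.val_inj]
  apply Finset.eq_of_subset_of_card_le
  · simp only [Finset.image_subset_iff, Finset.mem_sdiff, Finset.mem_univ, true_and,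
      Finset.mem_singleton, Finset.mem_range]
    intro j hj h
    have := val_cast j
    rw [h, ZMod.val_zero] at this
    omega
  · rw [Finset.card_image_of_injOn injOn, Finset.card_range,
      Finset.card_sdiff_of_subset (Finset.subset_univ _), Finset.card_univ, ZMod.card,
      Finset.card_singleton, Nat.add_sub_cancel]

theorem ite_lt_natCast_sub_eq_natCast_dist {R : Type*} [AddGroupWithOne R] (x y : ℕ) :
    (if x < y then (y : R) - x else (x : R) - y) = (Nat.dist x y : R) := by
  split_ifs with h
  · rw [Nat.dist_eq_sub_of_le h.le, Nat.cast_sub h.le]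
  · rw [Nat.dist_eq_sub_of_le_right (not_lt.mp h), Nat.cast_sub (not_lt.mp h)]

theorem natCast_succ_sub_eq_neg {n s : ℕ} (hs : s ≤ n + 1) :
    ((n + 1 - s : ℕ) : ZMod (n + 1)) = -s := by
  rw [Nat.cast_sub hs, ZMod.natCast_self, zero_sub]

theorem map_natCast_dist_gappedZigzag_add_singleton {N s : ℕ} (hs : s % 2 = 1) (hsN : s ≤ N) :
    (Multiset.range (N - 1)).map (fun k =>
        (Nat.dist (gappedZigzag N s k) (gappedZigzag N s (k + 1)) : ZMod (N + 1))) +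
        {-(s : ZMod (N + 1))} =
      (Finset.univ \ {0} : Finset (ZMod (N + 1))).val := by
  have labels := congrArg (Multiset.map (Nat.cast : ℕ → ZMod (N + 1)))
    (map_dist_gappedZigzag_add_singleton hs hsN)
  rw [Multiset.map_add, Multiset.map_map, Multiset.map_singleton, Multiset.map_map,
    natCast_succ_sub_eq_neg (by omega)] at labels
  exact labels.trans (map_natCast_sub_range N)

theorem cycle_two_mod_four_oriented_beta_general (m : ℕ) (hm : 2 ≤ m % 4) :
    let a : ℕ → ℕ := fun k =>
      if k % 2 = 0 then k / 2
      else if k + 1 ≤ m / 2 then m + 1 - (k + 1) / 2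
      else m - (k + 1) / 2
    (∀ k < m, a k ≤ m) ∧
    (∀ j < m, ∀ k < m, a j = a k → j = k) ∧
    ((Finset.range (m - 1)).val.map (fun k =>
        if a k < a (k + 1) then ((a (k + 1) : ZMod (m + 1)) - (a k : ZMod (m + 1)))
        else ((a k : ZMod (m + 1)) - (a (k + 1) : ZMod (m + 1))))
      + {((a 0 : ZMod (m + 1)) - (a (m - 1) : ZMod (m + 1)))}
      = (Finset.univ \ {0} : Finset (ZMod (m + 1))).val) := by
  have half_odd : m / 2 % 2 = 1 := by omega
  have half_lt : m / 2 < m := by omega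
  intro a
  have a_eq : a = gappedZigzag m (m / 2) := rfl
  rw [a_eq]
  refine ⟨fun k hk => gappedZigzag_le (by omega),
    fun j hj k hk h => gappedZigzag_injOn m (m / 2) hj hk h, ?_⟩
  simp only [ite_lt_natCast_sub_eq_natCast_dist]
  have closing : ((gappedZigzag m (m / 2) 0 : ZMod (m + 1)) - gappedZigzag m (m / 2) (m - 1)) =
      -((m / 2 : ℕ) : ZMod (m + 1)) := by
    rw [gappedZigzag_zero, gappedZigzag_pred half_lt, Nat.cast_zero, zero_sub]
  rw [closing]
  exact map_natCast_dist_gappedZigzag_add_singleton half_odd half_lt.le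

/-- Theorem: let `m ≡ 2 (mod 4)` and label the cycle `C_m` (vertices `v_1,…,v_m`, with `v_i`
at index `k = i - 1`) by `a(v_i) = (i-1)/2` for `i` odd, `a(v_i) = m + 1 - i/2` for `i` even
with `i ≤ m/2`, and `a(v_i) = m - i/2` for `i` even with `i > m/2`.  Orient each edge
`{v_{k+1}, v_{k+2}}` (`0 ≤ k ≤ m-2`) towards the larger label (the natural orientation), and
orient the remaining edge `{v_m, v_1}` against the natural orientation, i.e. from `v_m` to
`v_1`.  Then `a` is an oriented β-valuation of the resulting digraph `C_m*`: `a` is injective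
with values in `{0,…,m}`, and the multiset of labels `a(head) - a(tail) (mod m+1)` over the
directed edges is `Z_{m+1} ∖ {0}`. -/
theorem cycle_two_mod_four_oriented_beta (m : ℕ) (hm : m % 4 = 2) :
    let a : ℕ → ℕ := fun k =>
      if k % 2 = 0 then k / 2
      else if k + 1 ≤ m / 2 then m + 1 - (k + 1) / 2
      else m - (k + 1) / 2
    (∀ k < m, a k ≤ m) ∧
    (∀ j < m, ∀ k < m, a j = a k → j = k) ∧
    ((Finset.range (m - 1)).val.map (fun k =>
        if a k < a (k + 1) then ((a (k + 1) : ZMod (m + 1)) - (a k : ZMod (m + 1)))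
        else ((a k : ZMod (m + 1)) - (a (k + 1) : ZMod (m + 1))))
      + {((a 0 : ZMod (m + 1)) - (a (m - 1) : ZMod (m + 1)))}
      = (Finset.univ \ {0} : Finset (ZMod (m + 1))).val) :=
  cycle_two_mod_four_oriented_beta_general m hm.ge
end

section
/- For all integers k ≥ 1 and l ≥ 1, there exists a (4kl² + 1, 4k, l, 1)-2-CEDF in Z_{4kl²+1}: that is, a family of 4k pairwise disjoint l-subsets A_0, A_1, …, A_{4k−1} of Z_{4kl²+1} such that the multiset union ⋃_{i=0}^{4k−1} Δ(A_{i+2 mod 4k}, A_i) equals Z_{4kl²+1} ∖ {0}. -/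
/-- The multiset of external differences `a - b` for `a ∈ A`, `b ∈ B`. -/
def EDFdelta {G : Type*} [AddGroup G] (A B : Finset G) : Multiset G :=
  (A ×ˢ B).val.map fun p => p.1 - p.2

/-! The case `l = 1` asks for a labelling of two disjoint directed `2k`-cycles by distinct elements
of `{0, …, 4k}` whose arc differences modulo `4k + 1` are all the nonzero residues. If the labels
along each cycle are alternately below and above a threshold, such a labelling blows up to every
`l`: a low label `a` becomes the block `{l²a + r | r < l}` and a high label `b` the block
`{l²b - lq | q < l}`. The differences of two such blocks, `l²(b - a) - (lq + r)`, form an interval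
of length `l²` because `lq + r` runs over the two-digit numbers in base `l`; the intervals coming
from different arcs tile the nonzero residues modulo `4kl² + 1`.

The labels run along both cycles in a zigzag, with consecutive arc differences changing by `2`, and
a defect about halfway makes the parity of the differences switch. -/

open Finset

section ExternalDifferences

variable {G ι : Type*} [AddGroup G]

theorem mem_EDFdelta {A B : Finset G} {z : G} :
    z ∈ EDFdelta A B ↔ ∃ a ∈ A, ∃ b ∈ B, a - b = z := by
  simp [EDFdelta, and_assoc]

theorem card_EDFdelta (A B : Finset G) : (EDFdelta A B).card = A.card * B.card := by
  simp [EDFdelta]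

theorem bind_EDFdelta_eq_univ_sdiff_zero [Fintype G] [DecidableEq G] {s : Finset ι} {σ : ι → ι}
    {A : ι → Finset G} {l : ℕ} (hσ : Set.MapsTo σ s s) (hA : ∀ i ∈ s, (A i).card = l)
    (hG : Fintype.card G = s.card * l ^ 2 + 1)
    (hsurj : ∀ z ≠ 0, ∃ i ∈ s, z ∈ EDFdelta (A (σ i)) (A i)) :
    (s.val.bind fun i => EDFdelta (A (σ i)) (A i)) = (univ \ {0} : Finset G).val := by
  refine (Multiset.eq_of_le_of_card_le ?_ ?_).symm
  · refine (Multiset.le_iff_subset (Finset.nodup _)).2 fun z hz => ?_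
    exact Multiset.mem_bind.2 (hsurj z (mt mem_singleton.2 (mem_sdiff.1 hz).2))
  · have hcard : ∀ i ∈ s, (EDFdelta (A (σ i)) (A i)).card = l ^ 2 := fun i hi => by
      rw [card_EDFdelta, hA _ (hσ hi), hA i hi, sq]
    calc (s.val.bind fun i => EDFdelta (A (σ i)) (A i)).card
        = ∑ i ∈ s, (EDFdelta (A (σ i)) (A i)).card := Multiset.card_bind _ _
      _ = s.card * l ^ 2 := by rw [sum_congr rfl hcard, sum_const, smul_eq_mul]
      _ ≤ (univ \ {0} : Finset G).card := by
        rw [card_sdiff_of_subset (subset_univ _), card_univ, hG, card_singleton,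
          Nat.add_sub_cancel]

end ExternalDifferences

section Digits

theorem eq_and_eq_of_mul_add_eq_mul_add {l x y q r : ℤ} (hq₀ : 0 ≤ q) (hq : q < l) (hr₀ : 0 ≤ r)
    (hr : r < l) (h : l * x + q = l * y + r) : x = y ∧ q = r := by
  have hl : 0 < l := hq₀.trans_lt hq
  obtain ⟨hx, hq'⟩ := (Int.ediv_emod_unique hl).2 ⟨add_comm q (l * x), hq₀, hq⟩
  obtain ⟨hy, hr'⟩ := (Int.ediv_emod_unique hl).2 ⟨(add_comm r (l * y)).trans h.symm, hr₀, hr⟩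
  exact ⟨hx.symm.trans hy, hq'.symm.trans hr'⟩

theorem exists_add_two_digits_eq_sq_mul {l m z : ℕ} (hz₀ : 0 < z) (hz : z ≤ m * l ^ 2) :
    ∃ d, 0 < d ∧ d ≤ m ∧ ∃ q < l, ∃ r < l, z + (l * q + r) = l ^ 2 * d := by
  have hl : 0 < l := Nat.pos_of_ne_zero fun h => by
    rw [h, zero_pow two_ne_zero, mul_zero] at hz
    omega
  obtain ⟨w, hw⟩ := Nat.exists_eq_add_of_le hz
  have hlt : w / l / l < m := by
    rw [Nat.div_div_eq_div_mul, ← sq]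
    exact Nat.div_lt_of_lt_mul (by linarith [mul_comm m (l ^ 2)])
  obtain ⟨d, hd⟩ := Nat.exists_eq_add_of_lt hlt
  refine ⟨d + 1, d.succ_pos, hd ▸ Nat.succ_le_succ (Nat.le_add_left _ _),
    w / l % l, Nat.mod_lt _ hl, w % l, Nat.mod_lt _ hl, ?_⟩
  have hw_digits : w = l * (l * (w / l / l) + w / l % l) + w % l := by
    rw [Nat.div_add_mod, Nat.div_add_mod]
  rw [hd] at hw
  linarith

end Digits

section BlowUp

/-- The `q`-th element of the block that replaces the label `a` when a labelling with threshold `t`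
is blown up by the factor `l`. It is an integer so that no subtraction truncates. -/
def blowUpElement (l t a q : ℕ) : ℤ :=
  if a < t then l ^ 2 * a + q else l ^ 2 * a - l * q

variable {l t a b q r : ℕ}

theorem blowUpElement_of_lt (ha : a < t) : blowUpElement l t a q = l ^ 2 * a + q := if_pos ha

theorem blowUpElement_of_le (ha : t ≤ a) : blowUpElement l t a q = l ^ 2 * a - l * q :=
  if_neg ha.not_gt

theorem blowUpElement_lt_of_lt_of_le (hq : q < l) (hr : r < l) (ha : a < t) (hb : t ≤ b) :
    blowUpElement l t a q < blowUpElement l t b r := by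
  rw [blowUpElement_of_lt ha, blowUpElement_of_le hb]
  have hlab : (l : ℤ) ^ 2 * (a + 1) ≤ l ^ 2 * b :=
    mul_le_mul_of_nonneg_left (by exact_mod_cast ha.trans_le hb) (sq_nonneg _)
  have hdigit : (l : ℤ) * (r + 1) ≤ l * l :=
    mul_le_mul_of_nonneg_left (by exact_mod_cast hr) l.cast_nonneg
  linarith [(Nat.cast_lt (α := ℤ)).2 hq]

theorem blowUpElement_inj (hq : q < l) (hr : r < l)
    (h : blowUpElement l t a q = blowUpElement l t b r) : a = b ∧ q = r := by
  have hl : (l : ℤ) ≠ 0 := by exact_mod_cast (q.zero_le.trans_lt hq).ne'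
  have hqz : (q : ℤ) < l := by exact_mod_cast hq
  have hrz : (r : ℤ) < l := by exact_mod_cast hr
  obtain ha | ha := lt_or_ge a t <;> obtain hb | hb := lt_or_ge b t
  · rw [blowUpElement_of_lt ha, blowUpElement_of_lt hb, sq, mul_assoc, mul_assoc] at h
    obtain ⟨hab, hqr⟩ := eq_and_eq_of_mul_add_eq_mul_add (by positivity) hqz (by positivity) hrz h
    exact ⟨by exact_mod_cast mul_left_cancel₀ hl hab, by exact_mod_cast hqr⟩
  · exact absurd h (blowUpElement_lt_of_lt_of_le hq hr ha hb).ne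
  · exact absurd h (blowUpElement_lt_of_lt_of_le hr hq hb ha).ne'
  · rw [blowUpElement_of_le ha, blowUpElement_of_le hb, sq, mul_assoc, mul_assoc, ← mul_sub,
      ← mul_sub] at h
    have hdigit : (l : ℤ) * b + q = l * a + r := by linarith [mul_left_cancel₀ hl h]
    obtain ⟨hba, hqr⟩ :=
      eq_and_eq_of_mul_add_eq_mul_add (by positivity) hqz (by positivity) hrz hdigit
    exact ⟨by exact_mod_cast hba.symm, by exact_mod_cast hqr⟩

theorem blowUpElement_mem_Ico_of_lt {m : ℕ} (hq : q < l) (ha : a < t) (ham : a < m) :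
    blowUpElement l t a q ∈ Set.Ico (0 : ℤ) (m * l ^ 2 + 1 : ℕ) := by
  rw [blowUpElement_of_lt ha]
  have hlab : l ^ 2 * (a + 1) ≤ l ^ 2 * m := Nat.mul_le_mul_left _ ham
  have hl : l ≤ l ^ 2 := Nat.le_self_pow two_ne_zero l
  refine ⟨by positivity, ?_⟩
  norm_cast
  linarith

theorem blowUpElement_mem_Ico_of_le {m : ℕ} (hq : q < l) (ha : t ≤ a) (ha₀ : 0 < a) (ham : a ≤ m) :
    blowUpElement l t a q ∈ Set.Ico (0 : ℤ) (m * l ^ 2 + 1 : ℕ) := by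
  rw [blowUpElement_of_le ha]
  have hdigit : (l : ℤ) * q ≤ l * l :=
    mul_le_mul_of_nonneg_left (by exact_mod_cast hq.le) l.cast_nonneg
  have hlow : (l : ℤ) ^ 2 * 1 ≤ l ^ 2 * a :=
    mul_le_mul_of_nonneg_left (by exact_mod_cast ha₀) (sq_nonneg _)
  have hhigh : (l : ℤ) ^ 2 * a ≤ l ^ 2 * m :=
    mul_le_mul_of_nonneg_left (by exact_mod_cast ham) (sq_nonneg _)
  have hlq : (0 : ℤ) ≤ l * q := by positivity
  refine ⟨by linarith, ?_⟩
  push_cast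
  linarith

/-- The block of residues modulo `N` that replaces the label `a` when a labelling with threshold `t`
is blown up by the factor `l`. -/
def blowUp (N l t a : ℕ) : Finset (ZMod N) :=
  (range l).image fun q => (blowUpElement l t a q : ZMod N)

theorem mem_blowUp {N : ℕ} {x : ZMod N} :
    x ∈ blowUp N l t a ↔ ∃ q < l, (blowUpElement l t a q : ZMod N) = x := by
  simp [blowUp]

end BlowUp

section DirectedAlphaLabelling

variable {ι : Type*}

/-- `d` is, modulo `n`, the difference of the labels along one of the arcs `i → σ i`, `i ∈ s`. -/
def IsArcDifference (n : ℕ) (s : Finset ι) (σ : ι → ι) (f : ι → ℕ) (d : ℕ) : Prop :=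
  ∃ i ∈ s, f (σ i) ≡ f i + d [MOD n]

/-- A directed analogue of Rosa's α-labellings of graphs with `m` edges. The digraph has vertex set
`s` and arcs `i → σ i`; every arc joins a label below the threshold `t` to one that is not, and arc
differences are taken modulo `m + 1` instead of in absolute value. -/
structure IsDirectedAlphaLabelling (m : ℕ) (s : Finset ι) (σ : ι → ι) (t : ℕ) (f : ι → ℕ) :
    Prop where
  card_eq : s.card = m
  mapsTo : Set.MapsTo σ s s
  injOn : Set.InjOn f s
  le : ∀ i ∈ s, f i ≤ m
  lt_threshold_iff : ∀ i ∈ s, f (σ i) < t ↔ t ≤ f i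
  isArcDifference : ∀ d, 0 < d → d ≤ m → IsArcDifference (m + 1) s σ f d

theorem eq_add_or_add_eq_add_of_modEq {n a b d : ℕ} (ha : a < n) (hb : b < n) (hd : d < n)
    (h : a ≡ b + d [MOD n]) : a = b + d ∨ a + n = b + d := by
  obtain hlt | hle := lt_or_ge (b + d) n
  · exact .inl (h.eq_of_lt_of_lt ha hlt)
  · obtain ⟨c, hc⟩ := Nat.exists_eq_add_of_le' hle
    rw [hc] at h ⊢
    have hac : a ≡ c [MOD n] := h.trans Nat.add_modEq_right
    exact .inr (congrArg (· + n) (hac.eq_of_lt_of_lt ha (by omega)))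

namespace IsDirectedAlphaLabelling

variable {m t : ℕ} {s : Finset ι} {σ : ι → ι} {f : ι → ℕ}

theorem blowUpElement_mem_Ico (hf : IsDirectedAlphaLabelling m s σ t f) {i : ι} (hi : i ∈ s)
    {l q : ℕ} (hq : q < l) :
    blowUpElement l t (f i) q ∈ Set.Ico (0 : ℤ) (m * l ^ 2 + 1 : ℕ) := by
  have hσi := hf.le _ (hf.mapsTo hi)
  have hiff := hf.lt_threshold_iff i hi
  obtain h | h := lt_or_ge (f i) t
  · exact blowUpElement_mem_Ico_of_lt hq h (by omega)
  · exact blowUpElement_mem_Ico_of_le hq h (by omega) (hf.le i hi)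

theorem eq_and_eq_of_cast_blowUpElement_eq (hf : IsDirectedAlphaLabelling m s σ t f) {i j : ι}
    (hi : i ∈ s) (hj : j ∈ s) {l q r : ℕ} (hq : q < l) (hr : r < l)
    (h : (blowUpElement l t (f i) q : ZMod (m * l ^ 2 + 1)) = blowUpElement l t (f j) r) :
    i = j ∧ q = r := by
  obtain ⟨hx₀, hx⟩ := hf.blowUpElement_mem_Ico hi hq
  obtain ⟨hy₀, hy⟩ := hf.blowUpElement_mem_Ico hj hr
  rw [ZMod.intCast_eq_intCast_iff', Int.emod_eq_of_lt hx₀ hx, Int.emod_eq_of_lt hy₀ hy] at h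
  obtain ⟨hlab, hqr⟩ := blowUpElement_inj hq hr h
  exact ⟨hf.injOn hi hj hlab, hqr⟩

theorem card_blowUp (hf : IsDirectedAlphaLabelling m s σ t f) (l : ℕ) {i : ι} (hi : i ∈ s) :
    (blowUp (m * l ^ 2 + 1) l t (f i)).card = l := by
  rw [blowUp, card_image_of_injOn, card_range]
  intro q hq r hr h
  exact (hf.eq_and_eq_of_cast_blowUpElement_eq hi hi (by simpa using hq) (by simpa using hr) h).2

theorem disjoint_blowUp (hf : IsDirectedAlphaLabelling m s σ t f) (l : ℕ) {i j : ι} (hi : i ∈ s)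
    (hj : j ∈ s) (hij : i ≠ j) :
    Disjoint (blowUp (m * l ^ 2 + 1) l t (f i)) (blowUp (m * l ^ 2 + 1) l t (f j)) := by
  refine disjoint_left.2 fun x hxi hxj => hij ?_
  obtain ⟨q, hq, rfl⟩ := mem_blowUp.1 hxi
  obtain ⟨r, hr, h⟩ := mem_blowUp.1 hxj
  exact (hf.eq_and_eq_of_cast_blowUpElement_eq hj hi hr hq h).1.symm

theorem exists_blowUpElement_sub_modEq (hf : IsDirectedAlphaLabelling m s σ t f) {l z : ℕ}
    (hz₀ : 0 < z) (hz : z ≤ m * l ^ 2) :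
    ∃ i ∈ s, ∃ q < l, ∃ r < l,
      blowUpElement l t (f (σ i)) q - blowUpElement l t (f i) r ≡ z [ZMOD (m * l ^ 2 + 1 : ℕ)] := by
  obtain ⟨d, hd₀, hd, q, hq, r, hr, hdigits⟩ := exists_add_two_digits_eq_sq_mul hz₀ hz
  obtain ⟨i, hi, harc⟩ := hf.isArcDifference d hd₀ hd
  have hσi := hf.le _ (hf.mapsTo hi)
  have hfi := hf.le i hi
  have hiff := hf.lt_threshold_iff i hi
  have hdiff := eq_add_or_add_eq_add_of_modEq (by omega) (by omega) (by omega) harc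
  refine ⟨i, hi, ?_⟩
  zify at hdigits
  obtain hlow | hhigh := lt_or_ge (f i) t
  · refine ⟨q, hq, r, hr, ?_⟩
    have hlab : (f (σ i) : ℤ) = f i + d := by omega
    have heq : blowUpElement l t (f (σ i)) q - blowUpElement l t (f i) r = z := by
      rw [blowUpElement_of_le (by omega), blowUpElement_of_lt hlow]
      linear_combination (l : ℤ) ^ 2 * hlab - hdigits
    rw [heq]
  · -- Descending arcs need the complementary digits: `l² - 1 - (lq + r) = l(l-1-q) + (l-1-r)`.
    refine ⟨l - 1 - r, by omega, l - 1 - q, by omega, ?_⟩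
    have hlab : (f (σ i) : ℤ) + (m + 1) = f i + d := by omega
    have hq' : ((l - 1 - q : ℕ) : ℤ) = l - 1 - q := by omega
    have hr' : ((l - 1 - r : ℕ) : ℤ) = l - 1 - r := by omega
    refine Int.modEq_iff_dvd.2 ⟨1, ?_⟩
    rw [blowUpElement_of_lt (hiff.2 hhigh), blowUpElement_of_le hhigh, hq', hr']
    push_cast
    linear_combination hdigits - (l : ℤ) ^ 2 * hlab

theorem exists_mem_EDFdelta_blowUp (hf : IsDirectedAlphaLabelling m s σ t f) (l : ℕ)
    {z : ZMod (m * l ^ 2 + 1)} (hz : z ≠ 0) :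
    ∃ i ∈ s, z ∈ EDFdelta (blowUp _ l t (f (σ i))) (blowUp _ l t (f i)) := by
  have hz₀ : 0 < z.val := Nat.pos_of_ne_zero ((ZMod.val_ne_zero z).2 hz)
  obtain ⟨i, hi, q, hq, r, hr, h⟩ :=
    hf.exists_blowUpElement_sub_modEq hz₀ (Nat.le_of_lt_succ z.val_lt)
  refine ⟨i, hi, mem_EDFdelta.2 ⟨_, mem_blowUp.2 ⟨q, hq, rfl⟩, _, mem_blowUp.2 ⟨r, hr, rfl⟩, ?_⟩⟩
  simpa using (ZMod.intCast_eq_intCast_iff _ _ _).2 h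

theorem bind_EDFdelta_blowUp (hf : IsDirectedAlphaLabelling m s σ t f) (l : ℕ) :
    (s.val.bind fun i => EDFdelta (blowUp _ l t (f (σ i))) (blowUp _ l t (f i))) =
      (univ \ {0} : Finset (ZMod (m * l ^ 2 + 1))).val :=
  bind_EDFdelta_eq_univ_sdiff_zero (A := fun i => blowUp _ l t (f i)) hf.mapsTo
    (fun _ => hf.card_blowUp l) (by rw [ZMod.card, hf.card_eq])
    fun _ => hf.exists_mem_EDFdelta_blowUp l

end IsDirectedAlphaLabelling

end DirectedAlphaLabelling

section TwoCycles

/-- The high labels of the even cycle `0 → 2 → ⋯ → 4k - 2 → 0`: the numbers from `4k` down to `3k`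
with `4k - k / 2` left out. -/
def evenCycleHigh (k i : ℕ) : ℕ :=
  if i < k / 2 then 4 * k - i else 4 * k - 1 - i

/-- The high labels of the odd cycle `1 → 3 → ⋯ → 4k - 1 → 1`. The one at position `k / 2 - 1` is
the label left out by `evenCycleHigh`. -/
def oddCycleHigh (k i : ℕ) : ℕ :=
  if i + 1 < k / 2 then 2 * k + 2 * (k / 2) - 1 - i
  else if i + 1 = k / 2 then 4 * k - k / 2
  else 2 * k + 2 * (k / 2) - i

/-- A labelling by numbers at most `4k` of the vertices `j < 4k` of the two directed cycles with
arcs `j → (j + 2) % (4k)`. Low and high labels alternate along each cycle. -/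
def twoCycleLabel (k j : ℕ) : ℕ :=
  if j % 4 = 0 then j / 4
  else if j % 4 = 1 then 2 * (k / 2) + 1 + j / 4
  else if j % 4 = 2 then evenCycleHigh k (j / 4)
  else oddCycleHigh k (j / 4)

variable {k i j d : ℕ}

theorem evenCycleHigh_of_lt (hi : i < k / 2) : evenCycleHigh k i = 4 * k - i := if_pos hi

theorem evenCycleHigh_of_le (hi : k / 2 ≤ i) : evenCycleHigh k i = 4 * k - 1 - i :=
  if_neg hi.not_gt

theorem oddCycleHigh_of_lt (hi : i + 1 < k / 2) :
    oddCycleHigh k i = 2 * k + 2 * (k / 2) - 1 - i :=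
  if_pos hi

theorem oddCycleHigh_of_eq (hi : i + 1 = k / 2) : oddCycleHigh k i = 4 * k - k / 2 := by
  rw [oddCycleHigh, if_neg hi.not_lt, if_pos hi]

theorem oddCycleHigh_of_le (hi : k / 2 ≤ i) : oddCycleHigh k i = 2 * k + 2 * (k / 2) - i := by
  rw [oddCycleHigh, if_neg (by omega), if_neg (by omega)]

theorem twoCycleLabel_four_mul (k i : ℕ) : twoCycleLabel k (4 * i) = i := by
  simp [twoCycleLabel]

theorem twoCycleLabel_four_mul_add_one (k i : ℕ) :
    twoCycleLabel k (4 * i + 1) = 2 * (k / 2) + 1 + i := by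
  simp [twoCycleLabel, show (4 * i + 1) % 4 = 1 by omega, show (4 * i + 1) / 4 = i by omega]

theorem twoCycleLabel_four_mul_add_two (k i : ℕ) :
    twoCycleLabel k (4 * i + 2) = evenCycleHigh k i := by
  simp [twoCycleLabel, show (4 * i + 2) % 4 = 2 by omega, show (4 * i + 2) / 4 = i by omega]

theorem twoCycleLabel_four_mul_add_three (k i : ℕ) :
    twoCycleLabel k (4 * i + 3) = oddCycleHigh k i := by
  simp [twoCycleLabel, show (4 * i + 3) % 4 = 3 by omega, show (4 * i + 3) / 4 = i by omega]

theorem twoCycleLabel_le (hj : j < 4 * k) : twoCycleLabel k j ≤ 4 * k := by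
  unfold twoCycleLabel evenCycleHigh oddCycleHigh
  split_ifs <;> omega

theorem twoCycleLabel_lt_iff (hj : j < 4 * k) :
    twoCycleLabel k j < k + 2 * (k / 2) + 1 ↔ j % 4 < 2 := by
  unfold twoCycleLabel evenCycleHigh oddCycleHigh
  split_ifs <;> omega

theorem twoCycleLabel_injOn (k : ℕ) : Set.InjOn (twoCycleLabel k) (range (4 * k)) := by
  intro i hi j hj h
  simp only [coe_range, Set.mem_Iio] at hi hj
  unfold twoCycleLabel evenCycleHigh oddCycleHigh at h
  split_ifs at h <;> omega

/-- `d` is a difference of labels of `twoCycleLabel k` along an arc of the two cycles, modulo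
`4k + 1`. -/
def IsTwoCycleArcDifference (k d : ℕ) : Prop :=
  IsArcDifference (4 * k + 1) (range (4 * k)) (fun j => (j + 2) % (4 * k)) (twoCycleLabel k) d

namespace IsTwoCycleArcDifference

theorem of_ascending (hj : j + 2 < 4 * k)
    (h : twoCycleLabel k (j + 2) = twoCycleLabel k j + d) : IsTwoCycleArcDifference k d := by
  refine ⟨j, mem_range.2 (by omega), ?_⟩
  beta_reduce
  rw [Nat.mod_eq_of_lt hj, h]

theorem of_descending (hj : j + 2 < 4 * k)
    (h : twoCycleLabel k (j + 2) + (4 * k + 1) = twoCycleLabel k j + d) :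
    IsTwoCycleArcDifference k d := by
  refine ⟨j, mem_range.2 (by omega), ?_⟩
  beta_reduce
  rw [Nat.mod_eq_of_lt hj, ← h]
  exact Nat.add_modEq_right.symm

theorem of_closing (hj : j < 4 * k) (hj' : 4 * k ≤ j + 2)
    (h : twoCycleLabel k (j + 2 - 4 * k) + (4 * k + 1) = twoCycleLabel k j + d) :
    IsTwoCycleArcDifference k d := by
  refine ⟨j, mem_range.2 hj, ?_⟩
  beta_reduce
  rw [Nat.mod_eq_sub_mod hj', Nat.mod_eq_of_lt (by omega), ← h]
  exact Nat.add_modEq_right.symm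

theorem evenCycle_ascending (hi : i < k) (h : evenCycleHigh k i = i + d) :
    IsTwoCycleArcDifference k d :=
  of_ascending (j := 4 * i) (by omega) <| by
    rw [twoCycleLabel_four_mul_add_two, twoCycleLabel_four_mul, h]

theorem evenCycle_descending (hi : i + 1 < k)
    (h : i + 1 + (4 * k + 1) = evenCycleHigh k i + d) : IsTwoCycleArcDifference k d :=
  of_descending (j := 4 * i + 2) (by omega) <| by
    rw [twoCycleLabel_four_mul_add_two, show 4 * i + 2 + 2 = 4 * (i + 1) by ring,
      twoCycleLabel_four_mul, h]

theorem oddCycle_ascending (hi : i < k) (h : oddCycleHigh k i = 2 * (k / 2) + 1 + i + d) :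
    IsTwoCycleArcDifference k d :=
  of_ascending (j := 4 * i + 1) (by omega) <| by
    rw [twoCycleLabel_four_mul_add_three, twoCycleLabel_four_mul_add_one, h]

theorem oddCycle_descending (hi : i + 1 < k)
    (h : 2 * (k / 2) + 1 + (i + 1) + (4 * k + 1) = oddCycleHigh k i + d) :
    IsTwoCycleArcDifference k d :=
  of_descending (j := 4 * i + 3) (by omega) <| by
    rw [twoCycleLabel_four_mul_add_three, show 4 * i + 3 + 2 = 4 * (i + 1) + 1 by ring,
      twoCycleLabel_four_mul_add_one, h]

theorem evenCycle_ascending_of_lt (hi : i < k / 2) (hd : d + 2 * i = 4 * k) :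
    IsTwoCycleArcDifference k d :=
  evenCycle_ascending (i := i) (by omega) (by rw [evenCycleHigh_of_lt hi]; omega)

theorem evenCycle_ascending_of_le (hi : k / 2 ≤ i) (hik : i < k) (hd : d + 2 * i + 1 = 4 * k) :
    IsTwoCycleArcDifference k d :=
  evenCycle_ascending hik (by rw [evenCycleHigh_of_le hi]; omega)

theorem evenCycle_descending_of_lt (hi : i < k / 2) (hd : d = 2 * i + 2) :
    IsTwoCycleArcDifference k d :=
  evenCycle_descending (i := i) (by omega) (by rw [evenCycleHigh_of_lt hi]; omega)

theorem evenCycle_descending_of_le (hi : k / 2 ≤ i) (hik : i + 1 < k) (hd : d = 2 * i + 3) :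
    IsTwoCycleArcDifference k d :=
  evenCycle_descending hik (by rw [evenCycleHigh_of_le hi]; omega)

theorem evenCycle_closing (hk : 0 < k) (hd : d = k + 1) : IsTwoCycleArcDifference k d :=
  of_closing (j := 4 * (k - 1) + 2) (by omega) (by omega) <| by
    rw [show 4 * (k - 1) + 2 + 2 - 4 * k = 4 * 0 by omega, twoCycleLabel_four_mul,
      twoCycleLabel_four_mul_add_two, evenCycleHigh_of_le (by omega)]
    omega

theorem oddCycle_ascending_of_lt (hi : i + 1 < k / 2) (hd : d + 2 * i + 2 = 2 * k) :
    IsTwoCycleArcDifference k d :=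
  oddCycle_ascending (i := i) (by omega) (by rw [oddCycleHigh_of_lt hi]; omega)

theorem oddCycle_ascending_of_eq (hi : i + 1 = k / 2) (hd : d + 4 * (k / 2) = 4 * k) :
    IsTwoCycleArcDifference k d :=
  oddCycle_ascending (i := i) (by omega) (by rw [oddCycleHigh_of_eq hi]; omega)

theorem oddCycle_ascending_of_le (hi : k / 2 ≤ i) (hik : i < k) (hd : d + 2 * i + 1 = 2 * k) :
    IsTwoCycleArcDifference k d :=
  oddCycle_ascending hik (by rw [oddCycleHigh_of_le hi]; omega)

theorem oddCycle_descending_of_lt (hi : i + 1 < k / 2) (hd : d = 2 * k + 2 * i + 4) :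
    IsTwoCycleArcDifference k d :=
  oddCycle_descending (i := i) (by omega) (by rw [oddCycleHigh_of_lt hi]; omega)

theorem oddCycle_descending_of_eq (hi : i + 1 = k / 2) (hd : d = 4 * (k / 2) + 2) :
    IsTwoCycleArcDifference k d :=
  oddCycle_descending (i := i) (by omega) (by rw [oddCycleHigh_of_eq hi]; omega)

theorem oddCycle_descending_of_le (hi : k / 2 ≤ i) (hik : i + 1 < k)
    (hd : d = 2 * k + 2 * i + 3) : IsTwoCycleArcDifference k d :=
  oddCycle_descending hik (by rw [oddCycleHigh_of_le hi]; omega)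

theorem oddCycle_closing (hk : 0 < k) (hd : d = 3 * k + 1) : IsTwoCycleArcDifference k d :=
  of_closing (j := 4 * (k - 1) + 3) (by omega) (by omega) <| by
    rw [show 4 * (k - 1) + 3 + 2 - 4 * k = 4 * 0 + 1 by omega, twoCycleLabel_four_mul_add_one,
      twoCycleLabel_four_mul_add_three, oddCycleHigh_of_le (by omega)]
    omega

theorem two_mul {c : ℕ} (hc₀ : 0 < c) (hc : c ≤ 2 * k) : IsTwoCycleArcDifference k (2 * c) := by
  have hk : 0 < k := by omega
  by_cases hevenClosing : 2 * c = k + 1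
  · exact evenCycle_closing hk hevenClosing
  by_cases hoddClosing : 2 * c = 3 * k + 1
  · exact oddCycle_closing hk hoddClosing
  by_cases hdefectUp : c + 2 * (k / 2) = 2 * k
  · exact oddCycle_ascending_of_eq (i := k / 2 - 1) (by omega) (by omega)
  by_cases hdefectDown : c = 2 * (k / 2) + 1
  · exact oddCycle_descending_of_eq (i := k / 2 - 1) (by omega) (by omega)
  by_cases hsmall : c ≤ k / 2
  · exact evenCycle_descending_of_lt (i := c - 1) (by omega) (by omega)
  by_cases hlarge : 2 * k < c + k / 2
  · exact evenCycle_ascending_of_lt (i := 2 * k - c) (by omega) (by omega)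
  obtain hck | hkc := lt_or_ge c k
  · exact oddCycle_ascending_of_lt (i := k - 1 - c) (by omega) (by omega)
  · exact oddCycle_descending_of_lt (i := c - k - 2) (by omega) (by omega)

theorem two_mul_add_one {c : ℕ} (hc : c < 2 * k) : IsTwoCycleArcDifference k (2 * c + 1) := by
  have hk : 0 < k := by omega
  by_cases hevenClosing : 2 * c = k
  · exact evenCycle_closing hk (by omega)
  by_cases hoddClosing : 2 * c = 3 * k
  · exact oddCycle_closing hk (by omega)
  by_cases hsmall : c + k / 2 < k
  · exact oddCycle_ascending_of_le (i := k - 1 - c) (by omega) (by omega) (by omega)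
  by_cases hlarge : k + k / 2 < c
  · exact oddCycle_descending_of_le (i := c - k - 1) (by omega) (by omega) (by omega)
  obtain hck | hkc := lt_or_ge c k
  · exact evenCycle_descending_of_le (i := c - 1) (by omega) (by omega) (by omega)
  · exact evenCycle_ascending_of_le (i := 2 * k - 1 - c) (by omega) (by omega) (by omega)

end IsTwoCycleArcDifference

theorem isDirectedAlphaLabelling_twoCycleLabel (k : ℕ) :
    IsDirectedAlphaLabelling (4 * k) (range (4 * k)) (fun j => (j + 2) % (4 * k))
      (k + 2 * (k / 2) + 1) (twoCycleLabel k) where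
  card_eq := card_range _
  mapsTo j hj := by
    rw [coe_range, Set.mem_Iio] at hj ⊢
    exact Nat.mod_lt _ (by omega)
  injOn := twoCycleLabel_injOn k
  le j hj := twoCycleLabel_le (mem_range.1 hj)
  lt_threshold_iff j hj := by
    rw [mem_range] at hj
    have hmod : (j + 2) % (4 * k) % 4 = (j + 2) % 4 := Nat.mod_mul_right_mod _ _ _
    rw [← not_lt, twoCycleLabel_lt_iff hj, twoCycleLabel_lt_iff (Nat.mod_lt _ (by omega)), hmod]
    omega
  isArcDifference d hd₀ hd := by
    obtain ⟨c, rfl | rfl⟩ := d.even_or_odd'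
    · exact IsTwoCycleArcDifference.two_mul (by omega) (by omega)
    · exact IsTwoCycleArcDifference.two_mul_add_one (by omega)

end TwoCycles

/-- Theorem: for all `k, l ≥ 1` there exists a `(4kl² + 1, 4k, l, 1)`-`2`-CEDF in
`Z_{4kl²+1}`: a family of `4k` pairwise disjoint `l`-subsets `A_0, …, A_{4k-1}` of
`Z_{4kl²+1}` such that the multiset union `⋃_{i=0}^{4k-1} Δ(A_{(i+2) mod 4k}, A_i)` equals
`Z_{4kl²+1} ∖ {0}`. -/
theorem two_CEDF_exists (k l : ℕ) (hk : 1 ≤ k) (hl : 1 ≤ l) :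
    ∃ A : ℕ → Finset (ZMod (4 * k * l ^ 2 + 1)),
      (∀ i < 4 * k, (A i).card = l) ∧
      (∀ i < 4 * k, ∀ j < 4 * k, i ≠ j → Disjoint (A i) (A j)) ∧
      ((Finset.range (4 * k)).val.bind fun i => EDFdelta (A ((i + 2) % (4 * k))) (A i))
        = (Finset.univ \ {0} : Finset (ZMod (4 * k * l ^ 2 + 1))).val := by
  have hf := isDirectedAlphaLabelling_twoCycleLabel k
  refine ⟨fun j => blowUp _ l (k + 2 * (k / 2) + 1) (twoCycleLabel k j), fun i hi => ?_,
    fun i hi j hj hij => ?_, ?_⟩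
  · exact hf.card_blowUp l (mem_range.2 hi)
  · exact hf.disjoint_blowUp l (mem_range.2 hi) (mem_range.2 hj) hij
  · exact hf.bind_EDFdelta_blowUp l
end
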